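/- Let n ≥ 1, s ∈ (0,1), C₀ > 0, let Ω ⊂ ℝⁿ be a bounded open set, and let u : ℝⁿ → ℝ be bounded, Lipschitz, and twice continuously differentiable in Ω, with |D²u(x)| ≤ C₀·dist(x,∂Ω)^{−1} for all x ∈ Ω and |u(x)| ≤ C₀·dist(x,Ωᶜ) for all x ∈ ℝⁿ. Then 𝔤 = (−Δ)^{s/2}u is differentiable at every point of ℝⁿ∖∂Ω with ∇𝔤(x) = c_{n,s/2} ∫_{ℝⁿ} (∇u(x) − ∇u(x+z))/|z|^{n+s} dz there, and there is a constant C (depending on n, s, C₀ and ‖u‖_{C^{0,1}(ℝⁿ)}) such that sup_{x : dist(x,∂Ω) ≥ ϱ} |∇𝔤(x)| ≤ C·ϱ^{−s} for every ϱ ∈ (0,1). -/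

import Mathlib

open MeasureTheory Real Set Metric Bornology Filter
open scoped RealInnerProductSpace ENNReal NNReal Pointwise

noncomputable section

abbrev En (n : ℕ) : Type := EuclideanSpace ℝ (Fin n)

/-- The normalizing constant `c_{n,s}`. -/
def cK (n : ℕ) (s : ℝ) : ℝ :=
  s * (2 : ℝ) ^ (2 * s) * Real.Gamma (((n : ℝ) + 2 * s) / 2) /
    (Real.pi ^ ((n : ℝ) / 2) * Real.Gamma (1 - s))

/-- The fractional Laplacian `(-Δ)ˢ u (x)`. -/
def fracLap (n : ℕ) (s : ℝ) (u : En n → ℝ) (x : En n) : ℝ :=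
  (cK n s / 2) * ∫ y : En n, (2 * u x - u (x + y) - u (x - y)) / ‖y‖ ^ ((n : ℝ) + 2 * s)

/-- `(-Δ)^{s/2} u (x)`, defined via the non-symmetrized integral. -/
def fracHalf (n : ℕ) (s : ℝ) (u : En n → ℝ) (x : En n) : ℝ :=
  cK n (s / 2) * ∫ z : En n, (u x - u (x + z)) / ‖z‖ ^ ((n : ℝ) + s)

/-- The squared Gagliardo-type seminorm `[u]_s²`. -/
def seminormSsq (n : ℕ) (s : ℝ) (u : En n → ℝ) : ℝ :=
  (cK n s / 2) * ∫ p : En n × En n, (u p.1 - u p.2) ^ 2 / ‖p.1 - p.2‖ ^ ((n : ℝ) + 2 * s)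

/-- The squared seminorm `[u]₁² = ∫_Ω |∇u|²`. -/
def seminorm1sq (n : ℕ) (Ω : Set (En n)) (u : En n → ℝ) : ℝ :=
  ∫ x in Ω, ‖gradient u x‖ ^ 2

/-- The Laplacian as the trace of the Hessian. -/
def lap (n : ℕ) (u : En n → ℝ) (x : En n) : ℝ :=
  ∑ i : Fin n, fderiv ℝ (fun y => fderiv ℝ u y (EuclideanSpace.single i 1)) x
    (EuclideanSpace.single i 1)

/-- The Hessian `D²u(x)` as a continuous bilinear-type map; `‖hess n u x‖` is its operator
norm. -/
def hess (n : ℕ) (u : En n → ℝ) (x : En n) : En n →L[ℝ] En n →L[ℝ] ℝ :=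
  fderiv ℝ (fderiv ℝ u) x

/-- A bounded C² domain `Ω ⊆ ℝⁿ`: a bounded open connected set whose boundary is a C²
hypersurface, described by a global C² defining function with nonvanishing gradient
on the boundary. -/
structure C2Domain (n : ℕ) where
  carrier : Set (En n)
  phi : En n → ℝ
  phi_smooth : ContDiff ℝ 2 phi
  carrier_eq : carrier = {x | phi x < 0}
  grad_ne : ∀ x ∈ frontier carrier, gradient phi x ≠ 0
  bounded : IsBounded carrier
  connected : IsConnected carrier

/-- The outward unit normal `ν` on `∂Ω`. -/
def C2Domain.nu {n : ℕ} (D : C2Domain n) (x : En n) : En n :=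
  ‖gradient D.phi x‖⁻¹ • gradient D.phi x

/-- The normal derivative `∂u/∂ν` at a boundary point (the derivative from inside). -/
def normalDeriv {n : ℕ} (D : C2Domain n) (u : En n → ℝ) (x : En n) : ℝ :=
  fderivWithin ℝ u (closure D.carrier) x (D.nu x)

/-- `Ω` is strictly star-shaped with respect to `z₀`. -/
def C2Domain.StrictlyStarShapedAt {n : ℕ} (D : C2Domain n) (z₀ : En n) : Prop :=
  z₀ ∈ D.carrier ∧ ∀ x ∈ frontier D.carrier, 0 < ⟪x - z₀, D.nu x⟫

/-- `Ω` is strictly star-shaped. -/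
def C2Domain.StrictlyStarShaped {n : ℕ} (D : C2Domain n) : Prop :=
  ∃ z₀, D.StrictlyStarShapedAt z₀

/-- The Pohozaev boundary term `∫_{∂Ω} (∂u/∂ν)² (x·ν(x)) dS`, with `dS` the
`(n-1)`-dimensional Hausdorff measure on `∂Ω`. -/
def pohozaevBoundary {n : ℕ} (D : C2Domain n) (u : En n → ℝ) : ℝ :=
  ∫ x in frontier D.carrier, (normalDeriv D u x) ^ 2 * ⟪x, D.nu x⟫ ∂ μH[(n : ℝ) - 1]

/-- Condition (★). -/
def StarCond (n : ℕ) (s : ℝ) (Ω : Set (En n)) (u : En n → ℝ) : Prop :=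
  ∃ C > 0, ∃ γ ∈ Set.Ioo (0:ℝ) 1, ∀ x ∈ Ω,
    ‖hess n u x‖ ≤ C * infDist x (frontier Ω) ^ (γ - 1) ∧
    |u x| ≤ C * infDist x (frontier Ω) ∧
    |fracLap n s u x| ≤ C * (1 + (if s < 1/2 then 1 else 0)
      + (if s = 1/2 then |Real.log (infDist x (frontier Ω))| else 0)
      + (if 1/2 < s then infDist x (frontier Ω) ^ (1 - 2*s) else 0))

/-!
Differentiate `∫ (u x - u (x + z)) / ‖z‖ ^ (n + s) dz` under the integral sign. Around a point at
distance `r` from `∂Ω` the derivative of `u` is Lipschitz with constant of order `C₀ / r`, so for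
`‖z‖ < r` the increment `u · - u (· + z)` is Lipschitz with constant of order `C₀ ‖z‖ / r`, while
for `‖z‖ ≥ r` it has constant `2 L`. Both regimes are dominated by `min (‖z‖ / r) 1`, whose integral
against `‖z‖ ^ (-(n + s))` is `r ^ (-s)` times a constant by scaling. By Rademacher's theorem the
integrand is differentiable at the given point for almost every `z`.
-/

open Module (finrank)

section Increments

variable {E F : Type*} [NormedAddCommGroup E] [NormedAddCommGroup F]

lemma norm_sub_translate_le {v : E → F} {x : E} {r M : ℝ} {K : ℝ≥0} (hr : 0 < r)
    (hK : LipschitzOnWith K v (ball x r)) (hM : ∀ y, ‖v y‖ ≤ M) (z : E) :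
    ‖v x - v (x + z)‖ ≤ (K * r + 2 * M) * min (‖z‖ / r) 1 := by
  have hM₀ : 0 ≤ M := (norm_nonneg _).trans (hM x)
  rcases lt_or_ge ‖z‖ r with hz | hz
  · have hxz : x + z ∈ ball x r := by simpa using hz
    rw [min_eq_left ((div_le_one hr).2 hz.le)]
    calc ‖v x - v (x + z)‖ ≤ K * ‖x - (x + z)‖ := hK.norm_sub_le (mem_ball_self hr) hxz
      _ = K * r * (‖z‖ / r) := by rw [sub_add_cancel_left, norm_neg]; field_simp
      _ ≤ (K * r + 2 * M) * (‖z‖ / r) := by gcongr; linarith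
  · rw [min_eq_right ((one_le_div hr).2 hz), mul_one]
    calc ‖v x - v (x + z)‖ ≤ M + M := norm_sub_le_of_le (hM _) (hM _)
      _ = 0 + 2 * M := by ring
      _ ≤ K * r + 2 * M := by gcongr; positivity

lemma norm_sub_translate_sub_le_of_far {u : E → F} {L : ℝ≥0} (hL : LipschitzWith L u)
    (z a b : E) : ‖(u a - u (a + z)) - (u b - u (b + z))‖ ≤ 2 * L * ‖a - b‖ := by
  have htranslate := hL.norm_sub_le (a + z) (b + z)
  rw [add_sub_add_right_eq_sub] at htranslate
  calc ‖(u a - u (a + z)) - (u b - u (b + z))‖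
      = ‖(u a - u b) - (u (a + z) - u (b + z))‖ := by rw [sub_sub_sub_comm]
    _ ≤ L * ‖a - b‖ + L * ‖a - b‖ := norm_sub_le_of_le (hL.norm_sub_le a b) htranslate
    _ = 2 * L * ‖a - b‖ := by ring

variable [NormedSpace ℝ E] [NormedSpace ℝ F]

lemma hasFDerivAt_sub_translate {u : E → F} {w z : E} (hw : DifferentiableAt ℝ u w)
    (hwz : DifferentiableAt ℝ u (w + z)) :
    HasFDerivAt (fun y => u y - u (y + z)) (fderiv ℝ u w - fderiv ℝ u (w + z)) w :=
  hw.hasFDerivAt.sub ((hasFDerivAt_comp_add_right z).2 hwz.hasFDerivAt)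

lemma norm_sub_translate_sub_le {u : E → F} {x : E} {r : ℝ} {K L : ℝ≥0} (hr : 0 < r)
    (hL : LipschitzWith L u) (hu : ∀ y ∈ ball x (2 * r), DifferentiableAt ℝ u y)
    (hK : LipschitzOnWith K (fderiv ℝ u) (ball x (2 * r))) (z : E) {a b : E}
    (ha : a ∈ ball x r) (hb : b ∈ ball x r) :
    ‖(u a - u (a + z)) - (u b - u (b + z))‖ ≤
      (K * r + 2 * L) * min (‖z‖ / r) 1 * ‖a - b‖ := by
  rcases lt_or_ge ‖z‖ r with hz | hz
  · have hball : ∀ w ∈ ball x r, ball w r ⊆ ball x (2 * r) := fun w hw =>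
      ball_subset_ball' (by linarith [mem_ball.1 hw])
    have hderiv : ∀ w ∈ ball x r, HasFDerivWithinAt (fun y => u y - u (y + z))
        (fderiv ℝ u w - fderiv ℝ u (w + z)) (ball x r) w := fun w hw =>
      (hasFDerivAt_sub_translate (hu w (hball w hw (mem_ball_self hr)))
        (hu (w + z) (hball w hw (by simpa using hz)))).hasFDerivWithinAt
    have hbound : ∀ w ∈ ball x r, ‖fderiv ℝ u w - fderiv ℝ u (w + z)‖ ≤
        (K * r + 2 * L) * min (‖z‖ / r) 1 := fun w hw =>
      norm_sub_translate_le hr (hK.mono (hball w hw))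
        (fun _ => norm_fderiv_le_of_lipschitz ℝ hL) z
    exact (convex_ball x r).norm_image_sub_le_of_norm_hasFDerivWithin_le hderiv hbound hb ha
  · rw [min_eq_right ((one_le_div hr).2 hz), mul_one]
    refine (norm_sub_translate_sub_le_of_far hL z a b).trans ?_
    gcongr
    exact le_add_of_nonneg_left (by positivity)

end Increments

section Kernel

variable {E : Type*} [NormedAddCommGroup E] [NormedSpace ℝ E]

/-- The kernel `min (‖z‖ / r) 1 * ‖z‖ ^ (-(dim E + s))`, which dominates the integrand of the
hypersingular integral of order `s` of a bounded function that is Lipschitz at scale `r`. -/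
def truncatedKernel (s r : ℝ) (z : E) : ℝ :=
  min (‖z‖ / r) 1 * (‖z‖ ^ ((finrank ℝ E : ℝ) + s))⁻¹

lemma truncatedKernel_nonneg (s : ℝ) {r : ℝ} (hr : 0 ≤ r) (z : E) :
    0 ≤ truncatedKernel s r z := by
  unfold truncatedKernel
  positivity

lemma truncatedKernel_eq_smul (s : ℝ) {r : ℝ} (hr : 0 < r) (z : E) :
    truncatedKernel s r z = (r ^ ((finrank ℝ E : ℝ) + s))⁻¹ * truncatedKernel s 1 (r⁻¹ • z) := by
  have hnorm : ‖r⁻¹ • z‖ = ‖z‖ / r := by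
    rw [norm_smul, Real.norm_of_nonneg (by positivity), inv_mul_eq_div]
  have hpow : r ^ ((finrank ℝ E : ℝ) + s) ≠ 0 := (Real.rpow_pos_of_pos hr _).ne'
  simp only [truncatedKernel]
  rw [hnorm, div_one, Real.div_rpow (norm_nonneg _) hr.le, inv_div]
  field_simp

lemma integrableOn_Ioi_min_mul_rpow {s : ℝ} (hs : s ∈ Ioo (0 : ℝ) 1) :
    IntegrableOn (fun t : ℝ => min t 1 * t ^ (-1 - s)) (Ioi 0) := by
  rw [← Ioc_union_Ioi_eq_Ioi (zero_le_one' ℝ)]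
  refine IntegrableOn.union ?near ?far
  case near =>
    have h : IntegrableOn (fun t : ℝ => t ^ (-s)) (Ioc 0 1) := by
      rw [← intervalIntegrable_iff_integrableOn_Ioc_of_le (zero_le_one' ℝ)]
      exact intervalIntegral.intervalIntegrable_rpow' (by linarith [hs.2])
    refine h.congr_fun (fun t ht => ?_) measurableSet_Ioc
    simp only
    rw [min_eq_left ht.2, ← Real.rpow_one_add' ht.1.le (by linarith [hs.1])]
    ring_nf
  case far =>
    have h : IntegrableOn (fun t : ℝ => t ^ (-1 - s)) (Ioi 1) :=
      integrableOn_Ioi_rpow_of_lt (by linarith [hs.1]) zero_lt_one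
    refine h.congr_fun (fun t ht => ?_) measurableSet_Ioi
    simp only
    rw [min_eq_right (mem_Ioi.1 ht).le, one_mul]

variable [FiniteDimensional ℝ E] [MeasurableSpace E] [BorelSpace E]
  (μ : Measure E) [μ.IsAddHaarMeasure]

lemma integrable_truncatedKernel_one [Nontrivial E] {s : ℝ} (hs : s ∈ Ioo (0 : ℝ) 1) :
    Integrable (truncatedKernel s 1 : E → ℝ) μ := by
  refine (integrable_fun_norm_addHaar μ
    (f := fun t : ℝ => min (t / 1) 1 * (t ^ ((finrank ℝ E : ℝ) + s))⁻¹)).2 ?_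
  refine (integrableOn_Ioi_min_mul_rpow hs).congr_fun (fun t ht => ?_) measurableSet_Ioi
  have ht : 0 < t := ht
  have hpow : t ^ (finrank ℝ E - 1) * (t ^ ((finrank ℝ E : ℝ) + s))⁻¹ = t ^ (-1 - s) := by
    rw [← Real.rpow_natCast, ← Real.rpow_neg ht.le, ← Real.rpow_add ht,
      Nat.cast_pred Module.finrank_pos]
    ring_nf
  simp only [smul_eq_mul]
  rw [div_one, mul_left_comm, hpow]

lemma integrable_truncatedKernel [Nontrivial E] {s : ℝ} (hs : s ∈ Ioo (0 : ℝ) 1)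
    {r : ℝ} (hr : 0 < r) : Integrable (truncatedKernel s r : E → ℝ) μ := by
  rw [funext (truncatedKernel_eq_smul (E := E) s hr)]
  exact ((integrable_comp_smul_iff μ _ (inv_ne_zero hr.ne')).2
    (integrable_truncatedKernel_one μ hs)).const_mul _

lemma integral_truncatedKernel (s : ℝ) {r : ℝ} (hr : 0 < r) :
    ∫ z : E, truncatedKernel s r z ∂μ = r ^ (-s) * ∫ z : E, truncatedKernel s 1 z ∂μ := by
  simp_rw [truncatedKernel_eq_smul s hr]
  rw [integral_const_mul, Measure.integral_comp_smul, smul_eq_mul, ← mul_assoc]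
  congr 1
  rw [inv_pow, inv_inv, abs_of_pos (by positivity), Real.rpow_add hr, Real.rpow_natCast,
    Real.rpow_neg hr.le]
  field_simp

end Kernel

section HypersingularIntegral

variable {E F G : Type*} [NormedAddCommGroup E] [NormedSpace ℝ E]
  [NormedAddCommGroup F] [NormedSpace ℝ F] [NormedAddCommGroup G] [NormedSpace ℝ G]

/-- The integrand `‖z‖ ^ (-(dim E + s)) • (v x - v (x + z))` of the hypersingular integral. -/
def hypersingularIntegrand (s : ℝ) (v : E → G) (x z : E) : G :=
  (‖z‖ ^ ((finrank ℝ E : ℝ) + s))⁻¹ • (v x - v (x + z))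

/-- The hypersingular integral of order `s`, which is `(-Δ)^{s/2} v (x)` up to the normalizing
constant. It is defined for vector-valued `v` so that it can be applied to derivatives. -/
def hypersingularIntegral [MeasurableSpace E] (μ : Measure E) (s : ℝ) (v : E → G) (x : E) : G :=
  ∫ z, hypersingularIntegrand s v x z ∂μ

lemma norm_hypersingularIntegrand_le (s : ℝ) {v : E → G} {x : E} {r M : ℝ} {K : ℝ≥0} (hr : 0 < r)
    (hK : LipschitzOnWith K v (ball x r)) (hM : ∀ y, ‖v y‖ ≤ M) (z : E) :
    ‖hypersingularIntegrand s v x z‖ ≤ (K * r + 2 * M) * truncatedKernel s r z := by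
  rw [hypersingularIntegrand, truncatedKernel, norm_smul, Real.norm_of_nonneg (by positivity),
    mul_comm, ← mul_assoc]
  gcongr
  exact norm_sub_translate_le hr hK hM z

lemma hasFDerivAt_hypersingularIntegrand (s : ℝ) {u : E → F} {x z : E}
    (hx : DifferentiableAt ℝ u x) (hxz : DifferentiableAt ℝ u (x + z)) :
    HasFDerivAt (fun w => hypersingularIntegrand s u w z)
      (hypersingularIntegrand s (fderiv ℝ u) x z) x :=
  (hasFDerivAt_sub_translate hx hxz).const_smul _

lemma lipschitzOnWith_hypersingularIntegrand (s : ℝ) {u : E → F} {x : E} {r : ℝ} {K L : ℝ≥0}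
    (hr : 0 < r) (hL : LipschitzWith L u) (hu : ∀ y ∈ ball x (2 * r), DifferentiableAt ℝ u y)
    (hK : LipschitzOnWith K (fderiv ℝ u) (ball x (2 * r))) (z : E) :
    LipschitzOnWith (Real.nnabs ((K * r + 2 * L) * truncatedKernel s r z))
      (fun w => hypersingularIntegrand s u w z) (ball x r) := by
  refine LipschitzOnWith.of_dist_le_mul fun a ha b hb => ?_
  have hpow : 0 ≤ (‖z‖ ^ ((finrank ℝ E : ℝ) + s))⁻¹ := by positivity
  have hkernel : 0 ≤ (K * r + 2 * L) * truncatedKernel s r z :=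
    mul_nonneg (by positivity) (truncatedKernel_nonneg s hr.le z)
  rw [Real.coe_nnabs, abs_of_nonneg hkernel, dist_eq_norm, dist_eq_norm]
  simp only [hypersingularIntegrand, truncatedKernel]
  rw [← smul_sub, norm_smul, Real.norm_of_nonneg hpow]
  calc _ ≤ (‖z‖ ^ ((finrank ℝ E : ℝ) + s))⁻¹ *
        ((K * r + 2 * L) * min (‖z‖ / r) 1 * ‖a - b‖) := by
        gcongr
        exact norm_sub_translate_sub_le hr hL hu hK z ha hb
    _ = _ := by ring

variable [FiniteDimensional ℝ E] [MeasurableSpace E] [BorelSpace E]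
  {μ : Measure E} [μ.IsAddHaarMeasure]

lemma aestronglyMeasurable_hypersingularIntegrand (s : ℝ) {v : E → G}
    (hv : AEStronglyMeasurable v μ) (x : E) :
    AEStronglyMeasurable (hypersingularIntegrand s v x) μ := by
  have htranslate : AEStronglyMeasurable (fun z => v (x + z)) μ :=
    hv.comp_quasiMeasurePreserving (quasiMeasurePreserving_add_left μ x)
  have hpow : Measurable fun z : E => (‖z‖ ^ ((finrank ℝ E : ℝ) + s))⁻¹ := by fun_prop
  exact hpow.aestronglyMeasurable.smul (aestronglyMeasurable_const.sub htranslate)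

variable [Nontrivial E] {s : ℝ} (hs : s ∈ Ioo (0 : ℝ) 1) {r : ℝ} (hr : 0 < r) {x : E} {K : ℝ≥0}
include hs hr

lemma integrable_hypersingularIntegrand {v : E → G} {M : ℝ} (hv : AEStronglyMeasurable v μ)
    (hK : LipschitzOnWith K v (ball x r)) (hM : ∀ y, ‖v y‖ ≤ M) :
    Integrable (hypersingularIntegrand s v x) μ :=
  ((integrable_truncatedKernel μ hs hr).const_mul _).mono'
    (aestronglyMeasurable_hypersingularIntegrand s hv x)
    (.of_forall (norm_hypersingularIntegrand_le s hr hK hM))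

lemma norm_hypersingularIntegral_le {v : E → G} {M : ℝ}
    (hK : LipschitzOnWith K v (ball x r)) (hM : ∀ y, ‖v y‖ ≤ M) :
    ‖hypersingularIntegral μ s v x‖ ≤
      (K * r + 2 * M) * (r ^ (-s) * ∫ z : E, truncatedKernel s 1 z ∂μ) := by
  rw [← integral_truncatedKernel μ s hr, ← integral_const_mul]
  exact norm_integral_le_of_norm_le ((integrable_truncatedKernel μ hs hr).const_mul _)
    (.of_forall (norm_hypersingularIntegrand_le s hr hK hM))

theorem hasFDerivAt_hypersingularIntegral [FiniteDimensional ℝ F] {u : E → F} {M : ℝ} {L : ℝ≥0}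
    (hM : ∀ y, ‖u y‖ ≤ M) (hL : LipschitzWith L u)
    (hu : ∀ y ∈ ball x (2 * r), DifferentiableAt ℝ u y)
    (hK : LipschitzOnWith K (fderiv ℝ u) (ball x (2 * r))) :
    HasFDerivAt (hypersingularIntegral μ s u) (hypersingularIntegral μ s (fderiv ℝ u) x) x := by
  have : CompleteSpace F := FiniteDimensional.complete ℝ F
  have hu_meas : AEStronglyMeasurable u μ := hL.continuous.aestronglyMeasurable
  have hfderiv_meas : AEStronglyMeasurable (fderiv ℝ u) μ :=
    (measurable_fderiv ℝ u).aestronglyMeasurable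
  have hderiv : ∀ᵐ z ∂μ, HasFDerivAt (fun w => hypersingularIntegrand s u w z)
      (hypersingularIntegrand s (fderiv ℝ u) x z) x := by
    filter_upwards [(quasiMeasurePreserving_add_left μ x).ae hL.ae_differentiableAt] with z hz
    exact hasFDerivAt_hypersingularIntegrand s (hu x (mem_ball_self (by positivity))) hz
  exact (hasFDerivAt_integral_of_dominated_loc_of_lip (ball_mem_nhds x hr)
    (.of_forall (aestronglyMeasurable_hypersingularIntegrand s hu_meas))
    (integrable_hypersingularIntegrand hs hr hu_meas hL.lipschitzOnWith hM)
    (aestronglyMeasurable_hypersingularIntegrand s hfderiv_meas x)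
    (.of_forall (lipschitzOnWith_hypersingularIntegrand s hr hL hu hK))
    ((integrable_truncatedKernel μ hs hr).const_mul _) hderiv).2

end HypersingularIntegral

section Gradient

variable {E : Type*} [NormedAddCommGroup E] [InnerProductSpace ℝ E] [FiniteDimensional ℝ E]
  [MeasurableSpace E] {μ : Measure E}

lemma hypersingularIntegral_gradient {s : ℝ} {u : E → ℝ} {x : E}
    (hint : Integrable (hypersingularIntegrand s (fderiv ℝ u) x) μ) :
    hypersingularIntegral μ s (gradient u) x =
      (InnerProductSpace.toDual ℝ E).symm (hypersingularIntegral μ s (fderiv ℝ u) x) := by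
  simp only [hypersingularIntegral]
  refine Eq.trans ?_ (ContinuousLinearMap.integral_comp_commSL (by simp)
    (InnerProductSpace.toDual ℝ E).symm.toContinuousLinearEquiv.toContinuousLinearMap hint)
  simp [hypersingularIntegrand, gradient]

variable [BorelSpace E] [Nontrivial E] [μ.IsAddHaarMeasure] {s : ℝ} (hs : s ∈ Ioo (0 : ℝ) 1)
  {r : ℝ} (hr : 0 < r) {x : E} {u : E → ℝ} {K L : ℝ≥0} (hL : LipschitzWith L u)
include hs hr hL

lemma integrable_hypersingularIntegrand_fderiv
    (hK : LipschitzOnWith K (fderiv ℝ u) (ball x r)) :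
    Integrable (hypersingularIntegrand s (fderiv ℝ u) x) μ :=
  integrable_hypersingularIntegrand hs hr (measurable_fderiv ℝ u).aestronglyMeasurable hK
    fun _ => norm_fderiv_le_of_lipschitz ℝ hL

lemma hasGradientAt_hypersingularIntegral {M : ℝ} (hM : ∀ y, |u y| ≤ M)
    (hu : ∀ y ∈ ball x (2 * r), DifferentiableAt ℝ u y)
    (hK : LipschitzOnWith K (fderiv ℝ u) (ball x (2 * r))) :
    HasGradientAt (hypersingularIntegral μ s u) (hypersingularIntegral μ s (gradient u) x) x := by
  rw [hypersingularIntegral_gradient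
    (integrable_hypersingularIntegrand_fderiv hs (by positivity) hL hK)]
  exact (hasFDerivAt_hypersingularIntegral hs hr hM hL hu hK).hasGradientAt

lemma norm_hypersingularIntegral_gradient_le (hK : LipschitzOnWith K (fderiv ℝ u) (ball x r)) :
    ‖hypersingularIntegral μ s (gradient u) x‖ ≤
      (K * r + 2 * L) * (r ^ (-s) * ∫ z : E, truncatedKernel s 1 z ∂μ) := by
  rw [hypersingularIntegral_gradient (integrable_hypersingularIntegrand_fderiv hs hr hL hK),
    LinearIsometryEquiv.norm_map]
  exact norm_hypersingularIntegral_le hs hr hK fun _ => norm_fderiv_le_of_lipschitz ℝ hL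

end Gradient

lemma inv_infDist_le_inv {X : Type*} [PseudoMetricSpace X] {S : Set X} {x : X} {r : ℝ}
    (hr : 0 < r) (h : Disjoint (ball x r) S) : (infDist x S)⁻¹ ≤ r⁻¹ := by
  rcases S.eq_empty_or_nonempty with rfl | hS
  · simpa using hr.le
  · refine inv_anti₀ hr ((le_infDist hS).2 fun y hy => ?_)
    rw [dist_comm]
    exact not_lt.1 (disjoint_right.1 h hy)

lemma lipschitzOnWith_fderiv_of_norm_le_inv_infDist {E F : Type*} [NormedAddCommGroup E]
    [NormedSpace ℝ E] [NormedAddCommGroup F] [NormedSpace ℝ F] {S : Set E} {u : E → F} {x : E}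
    {C₀ ϱ : ℝ} (hC₀ : 0 ≤ C₀) (hϱ : 0 < ϱ)
    (hC2 : ∀ y ∉ S, ContDiffAt ℝ 2 u y)
    (hH : ∀ y ∉ S, ‖fderiv ℝ (fderiv ℝ u) y‖ ≤ C₀ * (infDist y S)⁻¹)
    (hball : Disjoint (ball x ϱ) S) :
    LipschitzOnWith (C₀ * (ϱ / 2)⁻¹).toNNReal (fderiv ℝ u) (ball x (ϱ / 2)) := by
  have hsub : ∀ y ∈ ball x (ϱ / 2), ball y (ϱ / 2) ⊆ ball x ϱ := fun y hy =>
    ball_subset_ball' (by linarith [mem_ball.1 hy])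
  have hS : ∀ y ∈ ball x (ϱ / 2), y ∉ S := fun y hy =>
    disjoint_left.1 hball (hsub y hy (mem_ball_self (by positivity)))
  refine (convex_ball x _).lipschitzOnWith_of_nnnorm_fderiv_le (𝕜 := ℝ) (fun y hy => ?_)
    fun y hy => ?_
  · exact ((hC2 y (hS y hy)).fderiv_right (m := 1) (by norm_num)).differentiableAt one_ne_zero
  · refine NNReal.le_toNNReal_of_coe_le ((hH y (hS y hy)).trans ?_)
    exact mul_le_mul_of_nonneg_left
      (inv_infDist_le_inv (half_pos hϱ) (hball.mono_left (hsub y hy))) hC₀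

section OffSingularSet

variable {E : Type*} [NormedAddCommGroup E] [InnerProductSpace ℝ E] [FiniteDimensional ℝ E]
  [MeasurableSpace E] [BorelSpace E] [Nontrivial E] {μ : Measure E} [μ.IsAddHaarMeasure]
  {s : ℝ} (hs : s ∈ Ioo (0 : ℝ) 1) {C₀ : ℝ} (hC₀ : 0 ≤ C₀) {u : E → ℝ} {L : ℝ≥0}
  (hL : LipschitzWith L u) {S : Set E} (hC2 : ∀ y ∉ S, ContDiffAt ℝ 2 u y)
  (hH : ∀ y ∉ S, ‖fderiv ℝ (fderiv ℝ u) y‖ ≤ C₀ * (infDist y S)⁻¹)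
  {x : E} {ϱ : ℝ} (hϱ : 0 < ϱ) (hball : Disjoint (ball x ϱ) S)
include hs hC₀ hL hC2 hH hϱ hball

lemma hasGradientAt_hypersingularIntegral_of_disjoint_ball {M : ℝ} (hM : ∀ y, |u y| ≤ M) :
    HasGradientAt (hypersingularIntegral μ s u) (hypersingularIntegral μ s (gradient u) x) x := by
  have hradius : 2 * (ϱ / 4) = ϱ / 2 := by ring
  have hK := lipschitzOnWith_fderiv_of_norm_le_inv_infDist hC₀ hϱ hC2 hH hball
  rw [← hradius] at hK
  refine hasGradientAt_hypersingularIntegral hs (by positivity) hL hM (fun y hy => ?_) hK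
  exact (hC2 y (disjoint_left.1 hball (ball_subset_ball (by linarith) hy))).differentiableAt
    two_ne_zero

lemma norm_hypersingularIntegral_gradient_le_of_disjoint_ball :
    ‖hypersingularIntegral μ s (gradient u) x‖ ≤
      (C₀ + 2 * L) * 2 ^ s * (∫ z : E, truncatedKernel s 1 z ∂μ) * ϱ ^ (-s) := by
  refine (norm_hypersingularIntegral_gradient_le hs (half_pos hϱ) hL
    (lipschitzOnWith_fderiv_of_norm_le_inv_infDist hC₀ hϱ hC2 hH hball)).trans_eq ?_
  rw [Real.coe_toNNReal _ (by positivity), inv_mul_cancel_right₀ (half_pos hϱ).ne',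
    Real.div_rpow hϱ.le zero_le_two, Real.rpow_neg zero_le_two, div_inv_eq_mul]
  ring

end OffSingularSet

lemma fracHalf_eq_hypersingularIntegral (n : ℕ) (s : ℝ) (u : En n → ℝ) :
    fracHalf n s u = fun x => cK n (s / 2) * hypersingularIntegral volume s u x := by
  ext x
  simp only [fracHalf, hypersingularIntegral, hypersingularIntegrand, finrank_euclideanSpace_fin,
    smul_eq_mul, div_eq_inv_mul]

lemma hypersingularIntegral_euclideanSpace {n : ℕ} (s : ℝ) (v : En n → En n) (x : En n) :
    hypersingularIntegral volume s v x =
      ∫ z : En n, (‖z‖ ^ ((n : ℝ) + s))⁻¹ • (v x - v (x + z)) := by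
  simp only [hypersingularIntegral, hypersingularIntegrand, finrank_euclideanSpace_fin]

lemma hasGradientAt_fracHalf {n : ℕ} {s : ℝ} {u : En n → ℝ} {x g : En n}
    (h : HasGradientAt (hypersingularIntegral volume s u) g x) :
    HasGradientAt (fracHalf n s u) (cK n (s / 2) • g) x := by
  rw [hasGradientAt_iff_hasFDerivAt, fracHalf_eq_hypersingularIntegral]
  simpa using h.hasFDerivAt.const_mul (cK n (s / 2))

/-- The condition `dist(x, S) ≥ ϱ` is written as `Disjoint (ball x ϱ) S`, which remains correct for
`S = ∅`, where the convention `infDist x ∅ = 0` would make it fail. -/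
theorem fracHalf_gradient_bound_general (n : ℕ) (hn : 1 ≤ n) (s C₀ : ℝ) (L : ℝ≥0)
    (hs : s ∈ Ioo (0 : ℝ) 1) (hC₀ : 0 ≤ C₀) :
    ∃ C > (0 : ℝ), ∀ (S : Set (En n)) (u : En n → ℝ) (M : ℝ),
      IsClosed S → (∀ x, |u x| ≤ M) → LipschitzWith L u →
      (∀ x ∉ S, ContDiffAt ℝ 2 u x) →
      (∀ x ∉ S, ‖hess n u x‖ ≤ C₀ * (infDist x S)⁻¹) →
      (∀ x ∉ S, HasGradientAt (fracHalf n s u)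
        (cK n (s / 2) •
          ∫ z : En n, (‖z‖ ^ ((n : ℝ) + s))⁻¹ • (gradient u x - gradient u (x + z))) x) ∧
      ∀ ϱ > 0, ∀ x, Disjoint (ball x ϱ) S →
        ‖gradient (fracHalf n s u) x‖ ≤ C * ϱ ^ (-s) := by
  have : NeZero n := ⟨Nat.one_le_iff_ne_zero.1 hn⟩
  have hI : 0 ≤ ∫ z : En n, truncatedKernel s 1 z :=
    integral_nonneg (truncatedKernel_nonneg s zero_le_one)
  refine ⟨|cK n (s / 2)| * ((C₀ + 2 * L) * 2 ^ s * ∫ z : En n, truncatedKernel s 1 z) + 1,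
    by positivity, fun S u M hS hM hL hC2 hH => ⟨fun x hx => ?_, fun ϱ hϱ x hball => ?_⟩⟩
  · obtain ⟨ϱ, hϱ, hball⟩ := Metric.isOpen_iff.1 hS.isOpen_compl x hx
    rw [← hypersingularIntegral_euclideanSpace]
    exact hasGradientAt_fracHalf (hasGradientAt_hypersingularIntegral_of_disjoint_ball hs hC₀ hL
      hC2 hH hϱ (subset_compl_iff_disjoint_right.1 hball) hM)
  · have hgrad := hasGradientAt_fracHalf (hasGradientAt_hypersingularIntegral_of_disjoint_ball hs
      hC₀ hL hC2 hH hϱ hball hM)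
    rw [hgrad.gradient, norm_smul, Real.norm_eq_abs, add_mul, mul_assoc]
    refine le_add_of_le_of_nonneg ?_ (by positivity)
    gcongr
    exact norm_hypersingularIntegral_gradient_le_of_disjoint_ball hs hC₀ hL hC2 hH hϱ hball

lemma eventuallyEq_zero_or_mem_interior_of_notMem_frontier {X Y : Type*} [TopologicalSpace X]
    [Zero Y] {Ω : Set X} {u : X → Y} (hzero : ∀ y ∉ Ω, u y = 0) {x : X} (hx : x ∉ frontier Ω) :
    u =ᶠ[nhds x] 0 ∨ x ∈ interior Ω := by
  rw [or_iff_not_imp_right]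
  intro hint
  have hcl : x ∉ closure Ω := fun h => hx ⟨h, hint⟩
  filter_upwards [isClosed_closure.isOpen_compl.mem_nhds hcl] with y hy
  exact hzero y fun h => hy (subset_closure h)

section VanishingOutside

variable {E F : Type*} [NormedAddCommGroup E] [NormedSpace ℝ E] [NormedAddCommGroup F]
  [NormedSpace ℝ F] {Ω : Set E} {u : E → F}

lemma contDiffAt_of_notMem_frontier {k : WithTop ℕ∞} (hu : ContDiffOn ℝ k u Ω)
    (hzero : ∀ y ∉ Ω, u y = 0) {x : E} (hx : x ∉ frontier Ω) : ContDiffAt ℝ k u x := by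
  rcases eventuallyEq_zero_or_mem_interior_of_notMem_frontier hzero hx with h | h
  · exact contDiffAt_const.congr_of_eventuallyEq h
  · exact hu.contDiffAt (mem_interior_iff_mem_nhds.1 h)

lemma norm_fderiv_fderiv_le_of_notMem_frontier {b : E → ℝ} (hb : ∀ y, 0 ≤ b y)
    (hH : ∀ y ∈ Ω, ‖fderiv ℝ (fderiv ℝ u) y‖ ≤ b y) (hzero : ∀ y ∉ Ω, u y = 0) {x : E}
    (hx : x ∉ frontier Ω) : ‖fderiv ℝ (fderiv ℝ u) x‖ ≤ b x := by
  rcases eventuallyEq_zero_or_mem_interior_of_notMem_frontier hzero hx with h | h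
  · have hhess : fderiv ℝ (fderiv ℝ u) x = 0 := by
      rw [h.fderiv.fderiv_eq, fderiv_zero]
      exact fderiv_const_apply 0
    rw [hhess]
    exact (norm_zero (E := E →L[ℝ] E →L[ℝ] F)).trans_le (hb x)
  · exact hH x (interior_subset h)

end VanishingOutside

/-- Lemma 2.3, differentiation of `𝔤 = (-Δ)^{s/2}u` off `∂Ω` and the
gradient bound `|∇𝔤| ≲ ϱ^{-s}` on `{dist(·,∂Ω) ≥ ϱ}`. -/
theorem fracHalf_gradient_bound (n : ℕ) (hn : 1 ≤ n) (s C₀ M : ℝ) (L : ℝ≥0)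
    (hs : s ∈ Set.Ioo (0:ℝ) 1) (hC₀ : 0 < C₀) :
    ∃ C > (0:ℝ), ∀ (Ω : Set (En n)) (u : En n → ℝ),
      IsOpen Ω → IsBounded Ω →
      (∀ x, |u x| ≤ M) → LipschitzWith L u → ContDiffOn ℝ 2 u Ω →
      (∀ x ∈ Ω, ‖hess n u x‖ ≤ C₀ * (infDist x (frontier Ω))⁻¹) →
      (∀ x, |u x| ≤ C₀ * infDist x Ωᶜ) →
      (∀ x, x ∉ frontier Ω →
        HasGradientAt (fracHalf n s u)
          (cK n (s / 2) •
            ∫ z : En n, (‖z‖ ^ ((n : ℝ) + s))⁻¹ • (gradient u x - gradient u (x + z))) x) ∧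
      ∀ ϱ ∈ Set.Ioo (0:ℝ) 1, ∀ x : En n, ϱ ≤ infDist x (frontier Ω) →
        ‖gradient (fracHalf n s u) x‖ ≤ C * ϱ ^ (-s) := by
  obtain ⟨C, hC, hgeneral⟩ := fracHalf_gradient_bound_general n hn s C₀ L hs hC₀.le
  refine ⟨C, hC, fun Ω u _ _ hM hL hC2 hH hdist => ?_⟩
  have hzero : ∀ y ∉ Ω, u y = 0 := fun y hy => by
    simpa [infDist_zero_of_mem (mem_compl hy)] using hdist y
  obtain ⟨hgrad, hbound⟩ := hgeneral (frontier Ω) u M isClosed_frontier hM hL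
    (fun _ => contDiffAt_of_notMem_frontier hC2 hzero)
    (fun _ => norm_fderiv_fderiv_le_of_notMem_frontier
      (fun _ => mul_nonneg hC₀.le (inv_nonneg.2 infDist_nonneg)) hH hzero)
  exact ⟨hgrad, fun ϱ hϱ x hx =>
    hbound ϱ hϱ.1 x (disjoint_ball_infDist.mono_left (ball_subset_ball hx))⟩
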